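/- arXiv:2503.03448 — 3 statements merged into one kernel-verified Lean document; each statement's English description precedes it below -/
import Mathlib

section
/- Let n ≥ 5 be a real number and k ≥ 1 an integer. Then S_{2k}(√n) > 0 and the quantity c_k := S_{2k}'(√n) / (2√n · S_{2k}(√n)) satisfies k/n ≤ c_k ≤ k/(√n(√n − 2)). (This is the two-sided estimate for the eigenvalues λ_k = −c_k of the generator of the heat semigroup on Aut⁺(B) with dim B = n.) -/
open Polynomial

/-- The (dilated) Chebyshev polynomials of the second kind:
`S 0 = 1`, `S 1 = X`, `S (k+2) = X * S (k+1) - S k`. -/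
noncomputable def S : ℕ → Polynomial ℝ
  | 0 => 1
  | 1 => Polynomial.X
  | (k + 2) => Polynomial.X * S (k + 1) - S k

/-!
A split polynomial satisfies `p'(x) / p(x) = ∑ 1 / (x - r)` over its roots `r`, and the roots of
`S m` are the numbers `2 cos ((j + 1) π / (m + 1))` for `j < m`. They are at most `2`, so for
`x > 2` each summand is at most `1 / (x - 2)`; the roots sum to `0`, so by convexity of `1 / t` the
summands average at least `1 / x`. Hence `m / x ≤ S_m'(x) / S_m(x) ≤ m / (x - 2)`; put `x = √n`
and divide by `2√n`.
-/

section SplitPolynomial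

theorem eval_ne_zero_of_roots_lt {R : Type*} [CommRing R] [IsDomain R] [Preorder R] {p : R[X]}
    {x : R} (hp : p ≠ 0) (hroots : ∀ r ∈ p.roots, r < x) : p.eval x ≠ 0 :=
  fun h ↦ (hroots x ((mem_roots hp).mpr h)).false

theorem eval_pos_of_roots_lt {R : Type*} [CommRing R] [LinearOrder R] [IsStrictOrderedRing R]
    {p : R[X]} {x : R} (hp : p.Splits) (hlead : 0 < p.leadingCoeff)
    (hroots : ∀ r ∈ p.roots, r < x) : 0 < p.eval x := by
  rw [hp.eval_eq_prod_roots]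
  refine mul_pos hlead (Multiset.prod_pos ?_)
  simpa only [Multiset.forall_mem_map_iff, sub_pos] using hroots

variable {K : Type*} [Field K] [LinearOrder K] [IsStrictOrderedRing K] {p : K[X]} {x : K}

theorem eval_derivative_div_eval_le (hp : p.Splits) (hp₀ : p ≠ 0) {a : K}
    (hroots : ∀ r ∈ p.roots, r ≤ a) (hx : a < x) :
    p.derivative.eval x / p.eval x ≤ p.natDegree / (x - a) := by
  have hpx : p.eval x ≠ 0 :=
    eval_ne_zero_of_roots_lt hp₀ fun r hr ↦ (hroots r hr).trans_lt hx
  have hterm : ∀ y ∈ p.roots.map (fun r ↦ 1 / (x - r)), y ≤ 1 / (x - a) := by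
    rw [Multiset.forall_mem_map_iff]
    intro r hr
    exact one_div_le_one_div_of_le (sub_pos.mpr hx) (sub_le_sub_left (hroots r hr) x)
  calc p.derivative.eval x / p.eval x
      = (p.roots.map fun r ↦ 1 / (x - r)).sum := hp.eval_derivative_div_eval_of_ne_zero hpx
    _ ≤ p.roots.card • (1 / (x - a)) := by
        simpa only [Multiset.card_map] using Multiset.sum_le_card_nsmul _ _ hterm
    _ = p.natDegree / (x - a) := by
        rw [hp.natDegree_eq_card_roots, nsmul_eq_mul, mul_one_div]

theorem two_mul_sub_mul_sq_le_one_div {a : K} (ha : 0 < a) (u : K) :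
    2 * u - a * u ^ 2 ≤ 1 / a := by
  have hsq : 1 / a - (2 * u - a * u ^ 2) = a * (1 / a - u) ^ 2 := by
    field_simp
    ring
  exact sub_nonneg.mp (hsq ▸ by positivity)

theorem natDegree_div_le_eval_derivative_div_eval (hp : p.Splits) (hp₀ : p ≠ 0) {c : K}
    (hsum : p.roots.sum = p.natDegree * c) (hroots : ∀ r ∈ p.roots, r < x) :
    p.natDegree / (x - c) ≤ p.derivative.eval x / p.eval x := by
  -- Bound `1 / (x - r)` below by its tangent line at the mean `r = c`.
  set u := 1 / (x - c) with hu
  have hu_sq : (x - c) * u ^ 2 = u := by grind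
  calc p.natDegree / (x - c)
      = p.natDegree * (2 * u - x * u ^ 2) + p.roots.sum * u ^ 2 := by
        rw [hsum, div_eq_mul_one_div, ← hu]
        linear_combination (p.natDegree : K) * hu_sq
    _ = (p.roots.map fun r ↦ 2 * u - (x - r) * u ^ 2).sum := by
        simp only [sub_mul, sub_sub_eq_add_sub, add_sub_right_comm, Multiset.sum_map_add,
          Multiset.map_const', Multiset.sum_replicate, Multiset.sum_map_mul_right,
          Multiset.map_id', nsmul_eq_mul, hp.natDegree_eq_card_roots]
    _ ≤ (p.roots.map fun r ↦ 1 / (x - r)).sum :=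
        Multiset.sum_map_le_sum_map _ _ fun r hr ↦
          two_mul_sub_mul_sq_le_one_div (sub_pos.mpr (hroots r hr)) u
    _ = p.derivative.eval x / p.eval x :=
        (hp.eval_derivative_div_eval_of_ne_zero (eval_ne_zero_of_roots_lt hp₀ hroots)).symm

end SplitPolynomial

theorem sum_cos_succ_mul_pi_div_eq_zero (m : ℕ) :
    ∑ j ∈ Finset.range m, Real.cos ((j + 1) * Real.pi / (m + 1)) = 0 := by
  -- Reversing the order of summation replaces each angle `θ` by `π - θ`.
  have hreflect : ∀ j ∈ Finset.range m,
      Real.cos (((m - 1 - j : ℕ) + 1) * Real.pi / (m + 1)) =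
        -Real.cos ((j + 1) * Real.pi / (m + 1)) := by
    intro j hj
    have hcast : ((m - 1 - j : ℕ) : ℝ) + 1 = m - j := by
      rw [← Nat.cast_sub (Finset.mem_range.mp hj).le]
      exact_mod_cast (by grind : m - 1 - j + 1 = m - j)
    rw [hcast, ← Real.cos_pi_sub]
    congr 1
    field_simp
    ring
  have hsum := Finset.sum_range_reflect (fun j : ℕ ↦ Real.cos ((j + 1) * Real.pi / (m + 1))) m
  rw [Finset.sum_congr rfl hreflect, Finset.sum_neg_distrib] at hsum
  exact self_eq_neg.mp hsum.symm

section Chebyshev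

variable (m : ℕ)

theorem S_eq_chebyshev_S : S m = Chebyshev.S ℝ m := by
  induction m using Nat.twoStepInduction with
  | zero => simp [S]
  | one => simp [S]
  | more m ih ih_succ =>
    rw [S, ih, ih_succ]
    push_cast
    exact (Chebyshev.S_add_two ℝ m).symm

theorem S_eq_U_comp : S m = (Chebyshev.U ℝ m).comp (C (1 / 2) * X) := by
  rw [S_eq_chebyshev_S, Chebyshev.S_eq_U_comp_half_mul_X, invOf_eq_inv, one_div]

theorem natDegree_S : (S m).natDegree = m := by
  rw [S_eq_U_comp, natDegree_comp, Chebyshev.natDegree_U_natCast,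
    natDegree_C_mul_X _ (by norm_num), mul_one]

theorem monic_S : (S m).Monic := by
  rw [Monic, S_eq_U_comp, leadingCoeff_comp (by simp), Chebyshev.leadingCoeff_U_natCast,
    Chebyshev.natDegree_U_natCast, leadingCoeff_C_mul_X, ← mul_pow]
  norm_num

theorem roots_S : (S m).roots =
    (Multiset.range m).map fun j : ℕ ↦ 2 * Real.cos ((j + 1) * Real.pi / (m + 1)) := by
  have hU : (Chebyshev.U ℝ m).roots =
      (Multiset.range m).map fun j : ℕ ↦ Real.cos ((j + 1) * Real.pi / (m + 1)) := by
    rw [Chebyshev.roots_U_real, Finset.image_val, Finset.range_val,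
      (Chebyshev.roots_U_real_nodup m).dedup]
  have hcomp := roots_comp_C_mul_X_add_C (Chebyshev.U ℝ m) (1 / 2) 0 (by norm_num)
  rw [C_0, add_zero, ← S_eq_U_comp, hU, Multiset.map_map] at hcomp
  simpa using hcomp

theorem splits_S : (S m).Splits := by
  rw [splits_iff_card_roots, natDegree_S, roots_S, Multiset.card_map, Multiset.card_range]

theorem sum_roots_S : (S m).roots.sum = 0 := by
  rw [roots_S, Multiset.sum_map_mul_left]
  exact mul_eq_zero_of_right 2 (sum_cos_succ_mul_pi_div_eq_zero m)

variable {m}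

theorem le_two_of_mem_roots_S {r : ℝ} (hr : r ∈ (S m).roots) : r ≤ 2 := by
  rw [roots_S, Multiset.mem_map] at hr
  obtain ⟨j, -, rfl⟩ := hr
  linarith [Real.cos_le_one ((j + 1) * Real.pi / (m + 1))]

variable {x : ℝ}

theorem eval_S_pos (hx : 2 < x) : 0 < (S m).eval x :=
  eval_pos_of_roots_lt (splits_S m) ((monic_S m).leadingCoeff ▸ one_pos)
    fun _ hr ↦ (le_two_of_mem_roots_S hr).trans_lt hx

theorem div_le_eval_derivative_S_div_eval_S (hx : 2 < x) :
    m / x ≤ (S m).derivative.eval x / (S m).eval x := by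
  have hmean : (S m).roots.sum = (S m).natDegree * 0 := by rw [sum_roots_S, mul_zero]
  simpa only [natDegree_S, sub_zero] using
    natDegree_div_le_eval_derivative_div_eval (splits_S m) (monic_S m).ne_zero hmean
      fun _ hr ↦ (le_two_of_mem_roots_S hr).trans_lt hx

theorem eval_derivative_S_div_eval_S_le (hx : 2 < x) :
    (S m).derivative.eval x / (S m).eval x ≤ m / (x - 2) := by
  simpa only [natDegree_S] using
    eval_derivative_div_eval_le (splits_S m) (monic_S m).ne_zero
      (fun _ ↦ le_two_of_mem_roots_S) hx

end Chebyshev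

theorem heat_semigroup_eigenvalue_estimate_general (n : ℝ) (hn : 4 < n) (m : ℕ) :
    0 < (S m).eval (Real.sqrt n) ∧
    (m / 2 : ℝ) / n ≤
      (S m).derivative.eval (Real.sqrt n) / (2 * Real.sqrt n * (S m).eval (Real.sqrt n)) ∧
    (S m).derivative.eval (Real.sqrt n) / (2 * Real.sqrt n * (S m).eval (Real.sqrt n)) ≤
      (m / 2 : ℝ) / (Real.sqrt n * (Real.sqrt n - 2)) := by
  have hx : 2 < Real.sqrt n := Real.lt_sqrt_of_sq_lt (by linarith)
  have hsq : Real.sqrt n * Real.sqrt n = n := Real.mul_self_sqrt (by linarith)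
  rw [mul_comm (2 * Real.sqrt n), ← div_div ((S m).derivative.eval _)]
  refine ⟨eval_S_pos hx, ?_, ?_⟩
  · calc (m / 2 : ℝ) / n = m / Real.sqrt n / (2 * Real.sqrt n) := by
          rw [div_div, div_div, mul_left_comm, hsq]
      _ ≤ _ := div_le_div_of_nonneg_right (div_le_eval_derivative_S_div_eval_S hx) (by positivity)
  · calc
      _ ≤ m / (Real.sqrt n - 2) / (2 * Real.sqrt n) :=
          div_le_div_of_nonneg_right (eval_derivative_S_div_eval_S_le hx) (by positivity)
      _ = (m / 2 : ℝ) / (Real.sqrt n * (Real.sqrt n - 2)) := by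
          rw [div_div, div_div]
          ring

/-- For a real number `n ≥ 5` and an integer `k ≥ 1`, one has `S_{2k}(√n) > 0` and the quantity
`c_k = S_{2k}'(√n) / (2√n · S_{2k}(√n))` satisfies `k/n ≤ c_k ≤ k/(√n(√n − 2))`. -/
theorem heat_semigroup_eigenvalue_estimate (n : ℝ) (hn : 5 ≤ n) (k : ℕ) (hk : 1 ≤ k) :
    0 < (S (2 * k)).eval (Real.sqrt n) ∧
    (k : ℝ) / n ≤
      (S (2 * k)).derivative.eval (Real.sqrt n) /
        (2 * Real.sqrt n * (S (2 * k)).eval (Real.sqrt n)) ∧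
    (S (2 * k)).derivative.eval (Real.sqrt n) /
        (2 * Real.sqrt n * (S (2 * k)).eval (Real.sqrt n)) ≤
      (k : ℝ) / (Real.sqrt n * (Real.sqrt n - 2)) := by
  simpa using heat_semigroup_eigenvalue_estimate_general n (by linarith) (2 * k)
end

section
/- Let d₀ := (log(11 + √105) − log 2)/log 3. For every integer k ≥ 1, the function φ_k(p) = (p−1)^{1−d₀k} · (2k+1)^{2−4/p} is nonincreasing on the interval [2, ∞). -/
/-- The constant `d₀ = (log(11 + √105) − log 2)/log 3`. -/
noncomputable def d₀ : ℝ := (Real.log (11 + Real.sqrt 105) - Real.log 2) / Real.log 3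

/-!
Put `b = 2k + 1` and `a = 1 - d₀ k`. The logarithm of `(p - 1) ^ a * b ^ (2 - 4 / p)` is
`2 log b + (a + log b) log (p - 1) - log b (log (p - 1) + 4 / p)`, and `log (p - 1) + 4 / p` has
derivative `(p - 2)² / ((p - 1) p²) ≥ 0`, so it suffices that `a + log b ≤ 0`. This condition reads
`1 + log (2k + 1) ≤ d₀ k`; since the left side is concave in `k` with slope `2 / 3 < d₀` at
`k = 1`, it follows from its case `k = 1`, that is, from `1 + log 3 ≤ d₀`.
-/

open Real Set

theorem monotoneOn_log_sub_one_add_four_div :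
    MonotoneOn (fun p : ℝ => log (p - 1) + 4 / p) (Ioi 1) := by
  have hasDerivAt {p : ℝ} (hp : 1 < p) : HasDerivAt (fun p : ℝ => log (p - 1) + 4 / p)
      ((p - 2) ^ 2 / ((p - 1) * p ^ 2)) p := by
    have hp₀ : p ≠ 0 := by linarith
    have hp₁ : p - 1 ≠ 0 := by linarith
    refine ((((hasDerivAt_id' p).sub_const 1).log hp₁).add
      ((hasDerivAt_const p 4).fun_div (hasDerivAt_id' p) hp₀)).congr_deriv ?_
    field_simp
    ring
  refine monotoneOn_of_hasDerivWithinAt_nonneg (convex_Ioi 1)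
    (fun p hp => (hasDerivAt hp).continuousAt.continuousWithinAt)
    (fun p hp => (hasDerivAt (interior_subset hp)).hasDerivWithinAt) fun p hp => ?_
  have : 0 < p - 1 := sub_pos.2 (interior_subset hp)
  positivity

theorem antitoneOn_sub_one_rpow_mul_rpow {a b : ℝ} (hb : 1 ≤ b) (hab : a + log b ≤ 0) :
    AntitoneOn (fun p : ℝ => (p - 1) ^ a * b ^ (2 - 4 / p)) (Ioi 1) := by
  have eq_exp {p : ℝ} (hp : 1 < p) : (p - 1) ^ a * b ^ (2 - 4 / p) =
      exp (2 * log b + (a + log b) * log (p - 1) - log b * (log (p - 1) + 4 / p)) := by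
    rw [rpow_def_of_pos (sub_pos.2 hp), rpow_def_of_pos (zero_lt_one.trans_le hb), ← exp_add]
    ring_nf
  intro p hp q hq hpq
  have log_mono : log (p - 1) ≤ log (q - 1) :=
    log_le_log (sub_pos.2 hp) (sub_le_sub_right hpq 1)
  simp only [eq_exp hp, eq_exp hq]
  exact exp_le_exp.2 <| sub_le_sub
    (add_le_add_right (mul_le_mul_of_nonpos_left log_mono hab) _)
    (mul_le_mul_of_nonneg_left (monotoneOn_log_sub_one_add_four_div hp hq hpq) (log_nonneg hb))

theorem log_two_mul_add_one_le {x : ℝ} (hx : 0 < 2 * x + 1) :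
    log (2 * x + 1) ≤ log 3 + 2 / 3 * (x - 1) := by
  have tangent : log ((2 * x + 1) / 3) ≤ (2 * x + 1) / 3 - 1 :=
    log_le_sub_one_of_pos (by positivity)
  rw [log_div (by positivity) (by norm_num)] at tangent
  linarith

theorem one_add_log_three_le_d₀ : 1 + log 3 ≤ d₀ := by
  have le_sqrt : (10.2 : ℝ) ≤ √105 := le_sqrt_of_sq_le (by norm_num)
  have log_pow_le : log (3 ^ 21) ≤ log (((11 + √105) / 2) ^ 10) := by
    refine log_le_log (by norm_num) ?_
    calc (3 : ℝ) ^ 21 ≤ 10.6 ^ 10 := by norm_num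
      _ ≤ ((11 + √105) / 2) ^ 10 := by gcongr; linarith
  rw [log_pow, log_pow, log_div (by positivity) two_ne_zero] at log_pow_le
  push_cast at log_pow_le
  calc 1 + log 3 ≤ 21 / 10 := by linarith [log_three_lt_d9]
    _ ≤ d₀ := by
      rw [d₀, le_div_iff₀ (log_pos (by norm_num))]
      linarith

theorem phi_antitone_general {d x : ℝ} (hd : 1 + log 3 ≤ d) (hx : 1 ≤ x) :
    AntitoneOn (fun p : ℝ => (p - 1) ^ (1 - d * x) * (2 * x + 1) ^ (2 - 4 / p)) (Ioi 1) := by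
  refine antitoneOn_sub_one_rpow_mul_rpow (by linarith) ?_
  have slope_le : 2 / 3 ≤ d := by linarith [log_three_gt_d9]
  have log_le : log (2 * x + 1) ≤ d * x - 1 :=
    calc log (2 * x + 1) ≤ log 3 + 2 / 3 * (x - 1) := log_two_mul_add_one_le (by linarith)
      _ ≤ (d - 1) + d * (x - 1) := by gcongr; linarith
      _ = d * x - 1 := by ring
  linarith

/-- For every integer `k ≥ 1`, the function `φ_k(p) = (p−1)^{1−d₀k} (2k+1)^{2−4/p}` is
nonincreasing on `[2, ∞)`. -/
theorem phi_antitone (k : ℕ) (hk : 1 ≤ k) :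
    AntitoneOn
      (fun p : ℝ => (p - 1) ^ (1 - d₀ * (k : ℝ)) * (2 * (k : ℝ) + 1) ^ (2 - 4 / p))
      (Set.Ici 2) :=
  (phi_antitone_general one_add_log_three_le_d₀ (Nat.one_le_cast.2 hk)).mono
    (Ici_subset_Ioi.2 one_lt_two)
end

section
/- Let c : ℕ → ℝ be a sequence with c(0) ≥ 0 and suppose there exist real constants 0 < A ≤ B such that A·k ≤ c(k) ≤ B·k for all integers k ≥ 1. Then for a real number s, sup_{t > 0} { t^s · ∑_{k=0}^{∞} (1+k)² e^{−2t(1+c(k))} } < ∞ if and only if s ≥ 3. -/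
/-!
If `λ_k` is comparable to `1 + k`, then `∑ (1 + k)^p e^{-t λ_k}` is of order `t^{-(p + 1)}` as
`t → 0`, because about `1/t` indices `k` are of order `1/t`, and each of these contributes a term
of order `t^{-p}`. As `t → ∞` the sum decays exponentially, so `t^s` times the sum is bounded
exactly when `t^{s - (p + 1)}` is bounded near `0`.
-/

open Real

lemma rpow_mul_exp_neg_mul_le {q r x : ℝ} (hq : 0 ≤ q) (hr : 0 < r) (hx : 0 ≤ x) :
    x ^ q * exp (-(r * x)) ≤ (q / r) ^ q := by
  have h := ProbabilityTheory.rpow_abs_le_mul_exp_abs x hq hr.ne'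
  rw [abs_of_nonneg hx, abs_of_pos hr] at h
  rwa [exp_neg, ← div_eq_mul_inv, div_le_iff₀ (exp_pos _)]

lemma hasSum_exp_neg_mul_one_add {y : ℝ} (hy : 0 < y) :
    HasSum (fun k : ℕ => exp (-(y * (1 + k)))) (exp y - 1)⁻¹ := by
  have hr : exp (-y) < 1 := exp_lt_one_iff.mpr (neg_lt_zero.mpr hy)
  have hterm (k : ℕ) : exp (-(y * (1 + k))) = exp (-y) * exp (-y) ^ k := by
    rw [← exp_nat_mul, ← exp_add]
    ring_nf
  have hvalue : (exp y - 1)⁻¹ = exp (-y) * (1 - exp (-y))⁻¹ := by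
    rw [exp_neg, ← mul_inv, mul_one_sub, mul_inv_cancel₀ (exp_ne_zero y)]
  simpa only [hterm, hvalue] using
    (hasSum_geometric_of_lt_one (exp_pos (-y)).le hr).mul_left (exp (-y))

lemma inv_exp_sub_one_le {y : ℝ} (hy : 0 < y) : (exp y - 1)⁻¹ ≤ y⁻¹ * exp (-(y / 2)) := by
  have hsinh : y / 2 ≤ sinh (y / 2) := self_le_sinh_iff.mpr (by positivity)
  have hfactor : exp y - 1 = exp (y / 2) * (2 * sinh (y / 2)) := by
    rw [sinh_eq, mul_div_cancel₀ _ two_ne_zero, mul_sub, ← exp_add, ← exp_add]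
    simp
  rw [exp_neg, ← mul_inv, hfactor, mul_comm y]
  gcongr
  linarith

section WeightedExponentialSum

variable {p : ℝ} {lam : ℕ → ℝ} {a b t : ℝ}

lemma one_add_rpow_mul_exp_le (hp : 0 ≤ p) (ha : 0 < a) (hlam : ∀ k : ℕ, a * (1 + k) ≤ lam k)
    (ht : 0 < t) (k : ℕ) :
    (1 + k : ℝ) ^ p * exp (-t * lam k) ≤
      (p / (a * t / 2)) ^ p * exp (-(a * t / 2 * (1 + k))) := by
  -- Half of the decay absorbs the power; the other half is left to make the series converge.
  have hsplit : exp (-t * lam k) ≤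
      exp (-(a * t / 2 * (1 + k))) * exp (-(a * t / 2 * (1 + k))) := by
    rw [← exp_add, exp_le_exp]
    linarith [mul_le_mul_of_nonneg_left (hlam k) ht.le]
  calc (1 + k : ℝ) ^ p * exp (-t * lam k)
      ≤ (1 + k : ℝ) ^ p * (exp (-(a * t / 2 * (1 + k))) * exp (-(a * t / 2 * (1 + k)))) := by
        gcongr
    _ = (1 + k : ℝ) ^ p * exp (-(a * t / 2 * (1 + k))) * exp (-(a * t / 2 * (1 + k))) := by
        rw [mul_assoc]
    _ ≤ _ := by
        gcongr
        exact rpow_mul_exp_neg_mul_le hp (by positivity) (by positivity)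

lemma summable_one_add_rpow_mul_exp (hp : 0 ≤ p) (ha : 0 < a)
    (hlam : ∀ k : ℕ, a * (1 + k) ≤ lam k) (ht : 0 < t) :
    Summable fun k : ℕ => (1 + k : ℝ) ^ p * exp (-t * lam k) :=
  .of_nonneg_of_le (fun _ => by positivity) (one_add_rpow_mul_exp_le hp ha hlam ht)
    ((hasSum_exp_neg_mul_one_add (by positivity)).summable.mul_left _)

lemma tsum_one_add_rpow_mul_exp_le (hp : 0 ≤ p) (ha : 0 < a)
    (hlam : ∀ k : ℕ, a * (1 + k) ≤ lam k) (ht : 0 < t) :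
    ∑' k : ℕ, (1 + k : ℝ) ^ p * exp (-t * lam k) ≤
      (2 * p / a) ^ p * (2 / a) * (t ^ (-(p + 1)) * exp (-(a / 4 * t))) := by
  have hy : 0 < a * t / 2 := by positivity
  calc ∑' k : ℕ, (1 + k : ℝ) ^ p * exp (-t * lam k)
      ≤ (p / (a * t / 2)) ^ p * (exp (a * t / 2) - 1)⁻¹ :=
        hasSum_le (one_add_rpow_mul_exp_le hp ha hlam ht)
          (summable_one_add_rpow_mul_exp hp ha hlam ht).hasSum
          ((hasSum_exp_neg_mul_one_add hy).mul_left _)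
    _ ≤ (p / (a * t / 2)) ^ p * ((a * t / 2)⁻¹ * exp (-(a * t / 2 / 2))) := by
        gcongr
        exact inv_exp_sub_one_le hy
    _ = (2 * p / a / t) ^ p * (2 / a / t * exp (-(a / 4 * t))) := by
        congr 2 <;> field_simp
        norm_num
    _ = (2 * p / a) ^ p * (2 / a) * (t ^ (-(p + 1)) * exp (-(a / 4 * t))) := by
        rw [div_rpow (by positivity) ht.le, rpow_neg ht.le, rpow_add_one ht.ne']
        field_simp

lemma le_tsum_one_add_rpow_mul_exp (hp : 0 ≤ p) (hb : 0 ≤ b)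
    (hlam : ∀ k : ℕ, lam k ≤ b * (1 + k)) (ht : 0 < t) (ht1 : t ≤ 1)
    (hsum : Summable fun k : ℕ => (1 + k : ℝ) ^ p * exp (-t * lam k)) :
    exp (-(4 * b)) * t ^ (-(p + 1)) ≤ ∑' k : ℕ, (1 + k : ℝ) ^ p * exp (-t * lam k) := by
  set n := ⌈t⁻¹⌉₊
  have hn : t⁻¹ ≤ n := Nat.le_ceil _
  have hn2 : (n : ℝ) ≤ 2 * t⁻¹ := Nat.ceil_le_two_mul (by linarith [one_le_inv₀ ht |>.mpr ht1])
  have hterm : ∀ k ∈ Finset.Ico n (2 * n),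
      t⁻¹ ^ p * exp (-(4 * b)) ≤ (1 + k : ℝ) ^ p * exp (-t * lam k) := by
    intro k hk
    obtain ⟨hnk, hk2⟩ := Finset.mem_Ico.mp hk
    have hnk' : (n : ℝ) ≤ k := by exact_mod_cast hnk
    have hk2' : (1 + k : ℝ) ≤ 2 * n := by exact_mod_cast (by lia : 1 + k ≤ 2 * n)
    have hexp : t * lam k ≤ 4 * b := calc
      t * lam k ≤ t * (b * (4 * t⁻¹)) := by
        gcongr
        exact (hlam k).trans (by gcongr; linarith)
      _ = 4 * b := by field_simp
    gcongr <;> linarith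
  calc exp (-(4 * b)) * t ^ (-(p + 1)) = t⁻¹ * (t⁻¹ ^ p * exp (-(4 * b))) := by
        rw [rpow_neg ht.le, rpow_add_one ht.ne', inv_rpow ht.le, mul_inv]
        ring
    _ ≤ n * (t⁻¹ ^ p * exp (-(4 * b))) := by gcongr
    _ = (Finset.Ico n (2 * n)).card • (t⁻¹ ^ p * exp (-(4 * b))) := by
        rw [Nat.card_Ico, two_mul, Nat.add_sub_cancel, nsmul_eq_mul]
    _ ≤ ∑ k ∈ Finset.Ico n (2 * n), (1 + k : ℝ) ^ p * exp (-t * lam k) :=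
        Finset.card_nsmul_le_sum _ _ _ hterm
    _ ≤ ∑' k : ℕ, (1 + k : ℝ) ^ p * exp (-t * lam k) :=
        hsum.sum_le_tsum _ fun _ _ => by positivity

end WeightedExponentialSum

lemma nonneg_of_forall_rpow_le {q K : ℝ} (h : ∀ t : ℝ, 0 < t → t ≤ 1 → t ^ q ≤ K) : 0 ≤ q := by
  by_contra! hq
  obtain ⟨t, hKt, ht, ht1⟩ := ((tendsto_rpow_neg_nhdsGT_zero hq).eventually_gt_atTop K |>.and
    (Ioc_mem_nhdsGT one_pos)).exists
  exact hKt.not_ge (h t ht ht1)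

lemma min_mul_one_add_le {c : ℕ → ℝ} {A : ℝ} (hc0 : 0 ≤ c 0)
    (hA : ∀ k : ℕ, 1 ≤ k → A * k ≤ c k) (k : ℕ) : min A 1 * (1 + k) ≤ 1 + c k := by
  rcases k.eq_zero_or_pos with rfl | hk
  · simpa using Or.inr hc0
  · have hAk : min A 1 * k ≤ A * k := by gcongr; exact min_le_left A 1
    linarith [hA k hk, min_le_right A 1]

lemma one_add_le_max_mul_one_add {c : ℕ → ℝ} {B : ℝ} (hB : ∀ k : ℕ, 1 ≤ k → c k ≤ B * k) (k : ℕ) :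
    1 + c k ≤ max (max B 1) (1 + c 0) * (1 + k) := by
  rcases k.eq_zero_or_pos with rfl | hk
  · simp
  · have hBk : B * k ≤ max (max B 1) (1 + c 0) * k := by gcongr; simp
    linarith [hB k hk, (le_max_right B 1).trans (le_max_left _ (1 + c 0))]

theorem sup_t_pow_mul_sum_lt_top_iff_general {p : ℝ} (hp : 0 ≤ p) {lam : ℕ → ℝ} {a b : ℝ}
    (ha : 0 < a) (hlow : ∀ k : ℕ, a * (1 + k) ≤ lam k) (hup : ∀ k : ℕ, lam k ≤ b * (1 + k))
    (s : ℝ) :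
    (∃ M : ℝ, ∀ t : ℝ, 0 < t → t ^ s * ∑' k : ℕ, (1 + k : ℝ) ^ p * exp (-t * lam k) ≤ M) ↔
      p + 1 ≤ s := by
  have hpow {t : ℝ} (ht : 0 < t) : t ^ (s - (p + 1)) = t ^ s * t ^ (-(p + 1)) := by
    rw [← rpow_add ht, sub_eq_add_neg]
  constructor
  · rintro ⟨M, hM⟩
    have hb : 0 ≤ b := ha.le.trans (by simpa using (hlow 0).trans (hup 0))
    refine sub_nonneg.mp (nonneg_of_forall_rpow_le (K := M / exp (-(4 * b))) fun t ht ht1 => ?_)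
    rw [le_div_iff₀ (exp_pos _)]
    calc t ^ (s - (p + 1)) * exp (-(4 * b))
        = t ^ s * (exp (-(4 * b)) * t ^ (-(p + 1))) := by
          rw [hpow ht]
          ring
      _ ≤ t ^ s * ∑' k : ℕ, (1 + k : ℝ) ^ p * exp (-t * lam k) := by
          gcongr
          exact le_tsum_one_add_rpow_mul_exp hp hb hup ht ht1
            (summable_one_add_rpow_mul_exp hp ha hlow ht)
      _ ≤ M := hM t ht
  · intro hs
    refine ⟨(2 * p / a) ^ p * (2 / a) * ((s - (p + 1)) / (a / 4)) ^ (s - (p + 1)), fun t ht => ?_⟩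
    calc t ^ s * ∑' k : ℕ, (1 + k : ℝ) ^ p * exp (-t * lam k)
        ≤ t ^ s * ((2 * p / a) ^ p * (2 / a) * (t ^ (-(p + 1)) * exp (-(a / 4 * t)))) := by
          gcongr
          exact tsum_one_add_rpow_mul_exp_le hp ha hlow ht
      _ = (2 * p / a) ^ p * (2 / a) * (t ^ (s - (p + 1)) * exp (-(a / 4 * t))) := by
          rw [hpow ht]
          ring
      _ ≤ _ := by
          gcongr
          exact rpow_mul_exp_neg_mul_le (sub_nonneg.mpr hs) (by positivity) ht.le

/-- Let `c : ℕ → ℝ` with `c 0 ≥ 0` and suppose there are constants `0 < A ≤ B` with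
`A·k ≤ c k ≤ B·k` for all `k ≥ 1`. Then for a real `s`,
`sup_{t>0} t^s ∑_{k=0}^∞ (1+k)² e^{−2t(1+c k)} < ∞` if and only if `s ≥ 3`. -/
theorem sup_t_pow_mul_sum_lt_top_iff (c : ℕ → ℝ) (hc0 : 0 ≤ c 0) (A B : ℝ)
    (hA : 0 < A) (hAB : A ≤ B)
    (hbound : ∀ k : ℕ, 1 ≤ k → A * (k : ℝ) ≤ c k ∧ c k ≤ B * (k : ℝ)) (s : ℝ) :
    (∃ M : ℝ, ∀ t : ℝ, 0 < t →
      t ^ s * ∑' k : ℕ, (1 + (k : ℝ)) ^ 2 * Real.exp (-2 * t * (1 + c k)) ≤ M) ↔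
    3 ≤ s := by
  have hlow (k : ℕ) : 2 * min A 1 * (1 + k) ≤ 2 * (1 + c k) := by
    linarith [min_mul_one_add_le hc0 (fun j hj => (hbound j hj).1) k]
  have hup (k : ℕ) : 2 * (1 + c k) ≤ 2 * max (max B 1) (1 + c 0) * (1 + k) := by
    linarith [one_add_le_max_mul_one_add (fun j hj => (hbound j hj).2) k]
  have hexp (t : ℝ) (k : ℕ) : -2 * t * (1 + c k) = -t * (2 * (1 + c k)) := by ring
  simpa only [hexp, rpow_two, two_add_one_eq_three] using
    sup_t_pow_mul_sum_lt_top_iff_general zero_le_two (mul_pos two_pos (lt_min hA one_pos))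
      hlow hup s
end
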